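/- Let A be a finite set of arc labels. For every n ≥ 1 there exists an injective function from the set of labeled projective dependency trees on n words with labels in A (a projective dependency tree together with a function assigning an element of A to every non-root position) into the set of lists of length 2n − 1 over a tag alphabet of cardinality exactly 2·|A| + 4 (terminal tags paired with an arc label, plus the four nonterminal tags). -/

import Mathlib

/-- Binary head trees (BHTs). -/
inductive BHT : Type where
  | leaf : BHT
  | nodeL (l r : BHT) : BHT
  | nodeR (l r : BHT) : BHT

/-- Number of leaves of a BHT. -/
def BHT.numLeaves : BHT → ℕ
  | .leaf => 1
  | .nodeL l r => l.numLeaves + r.numLeaves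
  | .nodeR l r => l.numLeaves + r.numLeaves

/-- Head position of a BHT whose span of leaf positions starts at `i`. -/
def BHT.headAt : BHT → ℕ → ℕ
  | .leaf, i => i
  | .nodeL l _, i => l.headAt i
  | .nodeR l r, i => r.headAt (i + l.numLeaves)

/-- Head position of a BHT placed over positions `0, …, numLeaves - 1`. -/
def BHT.head (T : BHT) : ℕ := T.headAt 0

/-- Arc set of a BHT whose span of leaf positions starts at `i`. -/
def BHT.arcsAt : BHT → ℕ → Set (ℕ × ℕ)
  | .leaf, _ => ∅
  | .nodeL l r, i =>
      insert (l.headAt i, r.headAt (i + l.numLeaves)) (l.arcsAt i ∪ r.arcsAt (i + l.numLeaves))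
  | .nodeR l r, i =>
      insert (r.headAt (i + l.numLeaves), l.headAt i) (l.arcsAt i ∪ r.arcsAt (i + l.numLeaves))

/-- Arc set of a BHT placed over positions `0, …, numLeaves - 1`. -/
def BHT.arcs (T : BHT) : Set (ℕ × ℕ) := T.arcsAt 0

/-- `S` is a subtree of `T` (placed over positions `0, …, numLeaves - 1`) whose
leaf span starts at absolute position `i`. -/
inductive BHT.SubtreeAt : BHT → ℕ → BHT → Prop
  | refl (T : BHT) : BHT.SubtreeAt T 0 T
  | inlL (l r S : BHT) (i : ℕ) : BHT.SubtreeAt l i S → BHT.SubtreeAt (BHT.nodeL l r) i S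
  | inrL (l r S : BHT) (i : ℕ) :
      BHT.SubtreeAt r i S → BHT.SubtreeAt (BHT.nodeL l r) (l.numLeaves + i) S
  | inlR (l r S : BHT) (i : ℕ) : BHT.SubtreeAt l i S → BHT.SubtreeAt (BHT.nodeR l r) i S
  | inrR (l r S : BHT) (i : ℕ) :
      BHT.SubtreeAt r i S → BHT.SubtreeAt (BHT.nodeR l r) (l.numLeaves + i) S

/-- `bht2dep T j = some i` if `i` is the unique position with `(i, j) ∈ arcs T`,
and `none` if `j` has no incoming arc. -/
noncomputable def bht2dep (n : ℕ) (T : BHT) : Fin n → Option (Fin n) := fun j =>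
  letI := Classical.dec (∃! i : Fin n, ((i : ℕ), (j : ℕ)) ∈ T.arcs)
  if h : ∃! i : Fin n, ((i : ℕ), (j : ℕ)) ∈ T.arcs then some h.choose else none

/-- `head` is a dependency tree on `n` words: exactly one root (position with
`head r = none`), and every position reaches the root by iterating `head`. -/
def IsDepTree {n : ℕ} (head : Fin n → Option (Fin n)) : Prop :=
  ∃ r : Fin n, head r = none ∧ (∀ r' : Fin n, head r' = none → r' = r) ∧
    ∀ j : Fin n, Relation.ReflTransGen (fun a b => head a = some b) j r

/-- A dependency tree is projective if every position's set of descendants is an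
interval of consecutive positions. -/
def Projective {n : ℕ} (head : Fin n → Option (Fin n)) : Prop :=
  ∀ i : Fin n, ∃ a b : Fin n,
    ∀ j : Fin n, Relation.ReflTransGen (fun x y => head x = some y) j i ↔ (a ≤ j ∧ j ≤ b)

/-- The six hexatags: `tL`/`tR` are terminal tags (leaf that is a left/right child);
`leftL`/`leftR` are `⇐L`/`⇐R` (internal left child with head-label L/R);
`rightL`/`rightR` are `⇒L`/`⇒R` (internal right child with head-label L/R). -/
inductive Hexatag : Type where
  | tL | tR | leftL | leftR | rightL | rightR
deriving DecidableEq

/-- A hexatag is terminal if it is `tL` or `tR`. -/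
def Hexatag.isTerminal : Hexatag → Prop
  | .tL => True
  | .tR => True
  | _ => False

/-- In-order linearization; the Boolean records whether the current subtree is a
right child of its parent (the root counts as a left child by convention). -/
def BHT.hexatagsAux : BHT → Bool → List Hexatag
  | .leaf, false => [.tL]
  | .leaf, true => [.tR]
  | .nodeL l r, b =>
      l.hexatagsAux false ++ (if b then Hexatag.rightL else Hexatag.leftL) :: r.hexatagsAux true
  | .nodeR l r, b =>
      l.hexatagsAux false ++ (if b then Hexatag.rightR else Hexatag.leftR) :: r.hexatagsAux true

/-- The hexatag linearization of a BHT. -/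
def BHT.hexatags (T : BHT) : List Hexatag := T.hexatagsAux false

/-- The tags emitted for the leaves of a BHT, in left-to-right order. -/
def BHT.leafTagsAux : BHT → Bool → List Hexatag
  | .leaf, false => [.tL]
  | .leaf, true => [.tR]
  | .nodeL l r, _ => l.leafTagsAux false ++ r.leafTagsAux true
  | .nodeR l r, _ => l.leafTagsAux false ++ r.leafTagsAux true

/-- The tags emitted for the leaves of a BHT in left-to-right order (root
counts as a left child by convention). -/
def BHT.leafTags (T : BHT) : List Hexatag := T.leafTagsAux false

/-- Partial BHTs: binary head trees possibly containing a dummy placeholder. -/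
inductive PBHT : Type where
  | dummy : PBHT
  | leaf : PBHT
  | nodeL (l r : PBHT) : PBHT
  | nodeR (l r : PBHT) : PBHT
deriving DecidableEq

/-- Does a partial BHT contain a dummy? -/
def PBHT.hasDummy : PBHT → Bool
  | .dummy => true
  | .leaf => false
  | .nodeL l r => l.hasDummy || r.hasDummy
  | .nodeR l r => l.hasDummy || r.hasDummy

/-- Substitute `u` for the dummy in a partial BHT. -/
def PBHT.subst : PBHT → PBHT → PBHT
  | .dummy, u => u
  | .leaf, _ => .leaf
  | .nodeL l r, u => .nodeL (l.subst u) (r.subst u)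
  | .nodeR l r, u => .nodeR (l.subst u) (r.subst u)

/-- One step of the left-corner decoder on a stack of partial BHTs. -/
def hexStep : List PBHT → Hexatag → Option (List PBHT)
  | st, .tL => some (.leaf :: st)
  | t :: st, .tR => if t.hasDummy then some (t.subst .leaf :: st) else none
  | t :: st, .leftL => some (.nodeL t .dummy :: st)
  | t :: st, .leftR => some (.nodeR t .dummy :: st)
  | t :: u :: st, .rightL =>
      if u.hasDummy then some (u.subst (.nodeL t .dummy) :: st) else none
  | t :: u :: st, .rightR =>
      if u.hasDummy then some (u.subst (.nodeR t .dummy) :: st) else none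
  | _, _ => none

/-- The left-corner decoder: run the stack operations; succeed iff every
operation is defined and the final stack is a single dummy-free tree. -/
def tags2bht (τ : List Hexatag) : Option PBHT :=
  match τ.foldlM hexStep ([] : List PBHT) with
  | some [t] => if t.hasDummy then none else some t
  | _ => none

/-- Embedding of BHTs into partial BHTs. -/
def BHT.toPBHT : BHT → PBHT
  | .leaf => .leaf
  | .nodeL l r => .nodeL l.toPBHT r.toPBHT
  | .nodeR l r => .nodeR l.toPBHT r.toPBHT

/-- Stack-count increment of a hexatag. -/
def Hexatag.delta : Hexatag → ℤ
  | .tL => 1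
  | .tR => 0
  | .leftL => 0
  | .leftR => 0
  | .rightL => -1
  | .rightR => -1

/-- Running stack count `sₖ` after the first `k` tags of `τ`. -/
def stackCount (τ : List Hexatag) (k : ℕ) : ℤ :=
  ((τ.take k).map Hexatag.delta).sum

/-- Validity of a hexatag list (0-indexed: Lean index `k` is 1-indexed position `k+1`). -/
def ValidTags (τ : List Hexatag) : Prop :=
  (τ.length % 2 = 1 ∧
    ∀ k : ℕ, ∀ t : Hexatag, τ[k]? = some t →
      (k % 2 = 0 → t.isTerminal) ∧ (k % 2 = 1 → ¬ t.isTerminal)) ∧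
  τ[0]? = some Hexatag.tL ∧
  (∀ k : ℕ, ∀ t : Hexatag, τ[k]? = some t →
    (t = Hexatag.rightL ∨ t = Hexatag.rightR) → 2 ≤ stackCount τ k) ∧
  stackCount τ τ.length = 1

/-!
A projective dependency tree is binarized top down: in a phrase (a subtree occupying consecutive
positions) headed by `r`, an extreme position other than `r` lies below some child `c` of `r`, and
by projectivity the descendants of `c` form an initial or final segment of the phrase; both pieces
are again phrases, headed by `c` and by `r`. The arcs of the resulting binary head tree are those
of the dependency tree. The binary head tree in turn is recovered from its in-order hexatags by the
left-corner decoder, and the arc labels ride along on the terminal tags.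
-/

open Relation

section Phrase

variable {α : Type*} {h : α → Option α} {S : Set α} {r c j : α}

/-- The positions from which `i` is reached by iterating `h`, including `i`. -/
def descendants (h : α → Option α) (i : α) : Set α :=
  {j | ReflTransGen (fun x y => h x = some y) j i}

/-- `S` is a phrase headed by `r`: all heads of the other members of `S` lie in `S`. The head of `r`
is unconstrained, and `r` may have further dependents outside `S`. -/
structure IsPhrase (h : α → Option α) (S : Set α) (r : α) : Prop where
  head_mem : r ∈ S
  exists_parent_mem : ∀ j ∈ S, j ≠ r → ∃ i ∈ S, h j = some i

theorem not_transGen_self_of_mem_descendants (hr : h r = none) (hj : j ∈ descendants h r) :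
    ¬ TransGen (fun x y => h x = some y) j j := by
  induction hj using ReflTransGen.head_induction_on with
  | refl =>
    intro hcycle
    obtain ⟨i, hi, -⟩ := TransGen.head'_iff.1 hcycle
    simp [hr] at hi
  | @head j k hjk _ ih =>
    intro hcycle
    obtain ⟨i, hji, hij⟩ := TransGen.head'_iff.1 hcycle
    obtain rfl : k = i := Option.some.inj (hjk.symm.trans hji)
    exact ih (TransGen.tail' hij hjk)

theorem IsPhrase.exists_child_above {root : α} (hS : IsPhrase h S r) (hroot : h root = none)
    (hj : j ∈ descendants h root) (hjS : j ∈ S) (hjr : j ≠ r) :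
    ∃ c ∈ S, h c = some r ∧ j ∈ descendants h c := by
  induction hj using ReflTransGen.head_induction_on with
  | refl =>
    obtain ⟨i, -, hi⟩ := hS.exists_parent_mem root hjS hjr
    simp [hroot] at hi
  | @head j k hjk _ ih =>
    obtain ⟨i, hiS, hji⟩ := hS.exists_parent_mem j hjS hjr
    obtain rfl : k = i := Option.some.inj (hjk.symm.trans hji)
    by_cases hkr : k = r
    · exact ⟨j, hjS, hkr ▸ hjk, ReflTransGen.refl⟩
    · obtain ⟨c, hcS, hcr, hkc⟩ := ih hiS hkr
      exact ⟨c, hcS, hcr, ReflTransGen.head hjk hkc⟩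

theorem IsPhrase.inter_descendants (hS : IsPhrase h S r) (hc : c ∈ S)
    (hr : r ∉ descendants h c) : IsPhrase h (S ∩ descendants h c) c := by
  refine ⟨⟨hc, ReflTransGen.refl⟩, fun j ⟨hjS, hjc⟩ hne => ?_⟩
  obtain ⟨i, hiS, hji⟩ := hS.exists_parent_mem j hjS fun hjr => hr (hjr ▸ hjc)
  rcases ReflTransGen.cases_head hjc with rfl | ⟨k, hjk, hkc⟩
  · exact absurd rfl hne
  · obtain rfl : i = k := Option.some.inj (hji.symm.trans hjk)
    exact ⟨i, ⟨hiS, hkc⟩, hji⟩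

theorem IsPhrase.diff_descendants (hS : IsPhrase h S r) (hr : r ∉ descendants h c) :
    IsPhrase h (S \ descendants h c) r := by
  refine ⟨⟨hS.head_mem, hr⟩, fun j ⟨hjS, hjc⟩ hne => ?_⟩
  obtain ⟨i, hiS, hji⟩ := hS.exists_parent_mem j hjS hne
  exact ⟨i, ⟨hiS, fun hic => hjc (ReflTransGen.head hji hic)⟩, hji⟩

end Phrase

section Binarization

variable {n : ℕ} {h : Fin n → Option (Fin n)} {a e b : ℕ} {r c : Fin n} {l t T : BHT}

/-- The positions `j` with `a ≤ j < b`. The bounds are natural numbers, like the leaf positions of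
a `BHT`, so that `b = n` is possible. -/
def span (n a b : ℕ) : Set (Fin n) := {j | a ≤ (j : ℕ) ∧ (j : ℕ) < b}

theorem mem_span {j : Fin n} : j ∈ span n a b ↔ a ≤ j ∧ j < b := Iff.rfl

/-- `T` is a binary head tree over the positions `a, …, b - 1`, headed by `r`, whose arcs are the
arcs of the dependency tree `h` entering those positions, except the one entering `r`. -/
structure IsBinarization (h : Fin n → Option (Fin n)) (a b : ℕ) (r : Fin n) (T : BHT) : Prop where
  head_mem : r ∈ span n a b
  add_numLeaves : a + T.numLeaves = b
  headAt_eq : T.headAt a = r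
  mem_arcsAt_iff : ∀ i j : Fin n,
    ((i : ℕ), (j : ℕ)) ∈ T.arcsAt a ↔ j ∈ span n a b ∧ j ≠ r ∧ h j = some i

theorem isBinarization_leaf (h : Fin n → Option (Fin n)) (r : Fin n) :
    IsBinarization h r (r + 1) r .leaf where
  head_mem := ⟨le_rfl, Nat.lt_succ_self _⟩
  add_numLeaves := rfl
  headAt_eq := rfl
  mem_arcsAt_iff i j := by
    simp only [BHT.arcsAt, Set.mem_empty_iff_false, mem_span, false_iff]
    exact fun ⟨⟨_, _⟩, hne, _⟩ => hne (Fin.ext (by omega))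

theorem IsBinarization.nodeL (hl : IsBinarization h a e r l) (ht : IsBinarization h e b c t)
    (hc : h c = some r) : IsBinarization h a b r (.nodeL l t) := by
  obtain ⟨⟨har, hre⟩, hle, hlr, hla⟩ := hl
  obtain ⟨⟨hec, hcb⟩, hte, htc, hta⟩ := ht
  refine ⟨⟨har, by omega⟩, by simp only [BHT.numLeaves]; omega, hlr, fun i j => ?_⟩
  simp only [BHT.arcsAt, hle, hlr, htc, Set.mem_insert_iff, Set.mem_union, hla, hta,
    mem_span, Prod.mk.injEq]
  grind

theorem IsBinarization.nodeR (hl : IsBinarization h a e c l) (ht : IsBinarization h e b r t)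
    (hc : h c = some r) : IsBinarization h a b r (.nodeR l t) := by
  obtain ⟨⟨hac, hce⟩, hle, hlc, hla⟩ := hl
  obtain ⟨⟨her, hrb⟩, hte, htr, hta⟩ := ht
  refine ⟨⟨by omega, hrb⟩, by simp only [BHT.numLeaves]; omega, ?_, fun i j => ?_⟩
  · simp only [BHT.headAt, hle, htr]
  simp only [BHT.arcsAt, hle, hlc, htr, Set.mem_insert_iff, Set.mem_union, hla, hta,
    mem_span, Prod.mk.injEq]
  grind

theorem IsDepTree.exists_child_above (hh : IsDepTree h) {S : Set (Fin n)} (hS : IsPhrase h S r)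
    {j : Fin n} (hjS : j ∈ S) (hjr : j ≠ r) :
    ∃ c ∈ S, h c = some r ∧ j ∈ descendants h c ∧ r ∉ descendants h c := by
  obtain ⟨root, hroot, -, hreach⟩ := hh
  obtain ⟨c, hcS, hcr, hjc⟩ := hS.exists_child_above hroot (hreach j) hjS hjr
  exact ⟨c, hcS, hcr, hjc, fun hrc =>
    not_transGen_self_of_mem_descendants hroot (hreach c) (TransGen.head' hcr hrc)⟩

theorem IsPhrase.exists_initial_split (hh : IsDepTree h) (hp : Projective h)
    (hS : IsPhrase h (span n a b) r) (har : a < r) :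
    ∃ c e, h c = some r ∧ IsPhrase h (span n a e) c ∧ IsPhrase h (span n e b) r := by
  have hrb := hS.head_mem.2
  have hfirst : (⟨a, har.trans r.isLt⟩ : Fin n) ∈ span n a b := ⟨le_rfl, har.trans hrb⟩
  obtain ⟨c, hcS, hcr, hac, hrc⟩ := hh.exists_child_above hS hfirst (Fin.ne_of_val_ne har.ne)
  obtain ⟨p, q, hpq⟩ := hp c
  have hD : ∀ j, j ∈ descendants h c ↔ p ≤ j ∧ j ≤ q := hpq
  have hinter : span n a b ∩ descendants h c = span n a (q + 1) := by
    ext j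
    simp only [Set.mem_inter_iff, mem_span, hD, Fin.le_def] at *
    omega
  have hdiff : span n a b \ descendants h c = span n (q + 1) b := by
    ext j
    simp only [Set.mem_sdiff, mem_span, hD, Fin.le_def] at *
    omega
  exact ⟨c, q + 1, hcr, hinter ▸ hS.inter_descendants hcS hrc, hdiff ▸ hS.diff_descendants hrc⟩

theorem IsPhrase.exists_final_split (hh : IsDepTree h) (hp : Projective h) (hb : b ≤ n)
    (hS : IsPhrase h (span n a b) r) (hrb : r + 1 < b) :
    ∃ c e, h c = some r ∧ IsPhrase h (span n a e) r ∧ IsPhrase h (span n e b) c := by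
  have har := hS.head_mem.1
  have hlast : (⟨b - 1, by omega⟩ : Fin n) ∈ span n a b := by
    simp only [mem_span]
    omega
  obtain ⟨c, hcS, hcr, hbc, hrc⟩ :=
    hh.exists_child_above hS hlast (Fin.ne_of_val_ne (Nat.lt_sub_of_add_lt hrb).ne')
  obtain ⟨p, q, hpq⟩ := hp c
  have hD : ∀ j, j ∈ descendants h c ↔ p ≤ j ∧ j ≤ q := hpq
  have hinter : span n a b ∩ descendants h c = span n p b := by
    ext j
    simp only [Set.mem_inter_iff, mem_span, hD, Fin.le_def] at *
    omega
  have hdiff : span n a b \ descendants h c = span n a p := by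
    ext j
    simp only [Set.mem_sdiff, mem_span, hD, Fin.le_def] at *
    omega
  exact ⟨c, p, hcr, hdiff ▸ hS.diff_descendants hrc, hinter ▸ hS.inter_descendants hcS hrc⟩

theorem IsPhrase.exists_isBinarization (hh : IsDepTree h) (hp : Projective h) (hb : b ≤ n)
    (hS : IsPhrase h (span n a b) r) : ∃ T, IsBinarization h a b r T := by
  induction hm : b - a using Nat.strong_induction_on generalizing a b r with
  | _ m ih =>
    obtain ⟨har, hrb⟩ := hS.head_mem
    by_cases hinitial : a < r
    · obtain ⟨c, e, hcr, hleft, hright⟩ := hS.exists_initial_split hh hp hinitial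
      obtain ⟨hac, hce⟩ := hleft.head_mem
      obtain ⟨her, -⟩ := hright.head_mem
      obtain ⟨l, hl⟩ := ih (e - a) (by omega) (by omega) hleft rfl
      obtain ⟨t, ht⟩ := ih (b - e) (by omega) hb hright rfl
      exact ⟨_, hl.nodeR ht hcr⟩
    by_cases hfinal : r + 1 < b
    · obtain ⟨c, e, hcr, hleft, hright⟩ := hS.exists_final_split hh hp hb hfinal
      obtain ⟨-, hre⟩ := hleft.head_mem
      obtain ⟨hec, hcb⟩ := hright.head_mem
      obtain ⟨l, hl⟩ := ih (e - a) (by omega) (by omega) hleft rfl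
      obtain ⟨t, ht⟩ := ih (b - e) (by omega) hb hright rfl
      exact ⟨_, hl.nodeL ht hcr⟩
    obtain rfl : a = r := by omega
    obtain rfl : b = r + 1 := by omega
    exact ⟨_, isBinarization_leaf h r⟩

theorem exists_bht_of_projective (hh : IsDepTree h) (hp : Projective h) :
    ∃ T : BHT, T.numLeaves = n ∧
      ∀ i j : Fin n, ((i : ℕ), (j : ℕ)) ∈ T.arcs ↔ h j = some i := by
  obtain ⟨root, hroot, hunique, -⟩ := id hh
  have hspan : ∀ j : Fin n, j ∈ span n 0 n := fun j => ⟨Nat.zero_le _, j.isLt⟩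
  have hphrase : IsPhrase h (span n 0 n) root := by
    refine ⟨hspan root, fun j _ hj => ?_⟩
    obtain ⟨i, hi⟩ := Option.ne_none_iff_exists'.1 (mt (hunique j) hj)
    exact ⟨i, hspan i, hi⟩
  obtain ⟨T, hT⟩ := hphrase.exists_isBinarization hh hp le_rfl
  refine ⟨T, by simpa only [zero_add] using hT.add_numLeaves, fun i j => ?_⟩
  rw [BHT.arcs, hT.mem_arcsAt_iff]
  refine ⟨fun hij => hij.2.2, fun hij => ⟨hspan j, ?_, hij⟩⟩
  rintro rfl
  simp [hroot] at hij

end Binarization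

section Decoding

theorem PBHT.subst_subst (t u v : PBHT) : (t.subst u).subst v = t.subst (u.subst v) := by
  induction t with
  | dummy | leaf => rfl
  | nodeL l r ihl ihr | nodeR l r ihl ihr => simp only [subst, ihl, ihr]

theorem PBHT.hasDummy_subst (t u : PBHT) :
    (t.subst u).hasDummy = (t.hasDummy && u.hasDummy) := by
  induction t with
  | dummy | leaf => rfl
  | nodeL l r ihl ihr | nodeR l r ihl ihr =>
    simp only [subst, hasDummy, ihl, ihr, Bool.and_or_distrib_right]

namespace BHT

theorem hasDummy_toPBHT (T : BHT) : T.toPBHT.hasDummy = false := by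
  induction T with
  | leaf => rfl
  | nodeL l r ihl ihr | nodeR l r ihl ihr =>
    simp only [toPBHT, PBHT.hasDummy, ihl, ihr, Bool.or_self]

theorem toPBHT_subst (T : BHT) (u : PBHT) : T.toPBHT.subst u = T.toPBHT := by
  induction T with
  | leaf => rfl
  | nodeL l r ihl ihr | nodeR l r ihl ihr => simp only [toPBHT, PBHT.subst, ihl, ihr]

theorem toPBHT_injective : Function.Injective toPBHT := by
  intro T T' hT
  induction T generalizing T' with
  | leaf => cases T' <;> simp_all [toPBHT]
  | nodeL l r ihl ihr | nodeR l r ihl ihr =>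
    cases T' <;> simp only [toPBHT, reduceCtorEq, PBHT.nodeL.injEq, PBHT.nodeR.injEq] at hT
    rw [ihl hT.1, ihr hT.2]

theorem foldlM_hexStep_hexatagsAux (T : BHT) :
    (∀ st, (T.hexatagsAux false).foldlM hexStep st = some (T.toPBHT :: st)) ∧
      ∀ u st, u.hasDummy →
        (T.hexatagsAux true).foldlM hexStep (u :: st) = some (u.subst T.toPBHT :: st) := by
  induction T with
  | leaf => simp +contextual [hexatagsAux, hexStep, toPBHT]
  | nodeL l r ihl ihr | nodeR l r ihl ihr =>
    refine ⟨fun st => ?_, fun u st hu => ?_⟩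
    · simp [hexatagsAux, ihl.1, hexStep, ihr.2, PBHT.hasDummy, PBHT.subst, toPBHT_subst, toPBHT]
    · simp [hexatagsAux, ihl.1, hexStep, hu, ihr.2, PBHT.hasDummy_subst, PBHT.hasDummy,
        PBHT.subst_subst, PBHT.subst, toPBHT_subst, toPBHT]

theorem tags2bht_hexatags (T : BHT) : tags2bht T.hexatags = some T.toPBHT := by
  simp [tags2bht, hexatags, T.foldlM_hexStep_hexatagsAux.1, hasDummy_toPBHT]

theorem hexatags_injective : Function.Injective hexatags := fun T T' hT =>
  toPBHT_injective (Option.some.inj (by rw [← tags2bht_hexatags, hT, tags2bht_hexatags]))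

end BHT

end Decoding

section Labeling

/-- Labeled projective dependency trees on `n` words: a head function and a label function that is
defined exactly at the non-root positions. -/
abbrev LabeledProjectiveTree (n : ℕ) (A : Type*) : Type _ :=
  {p : (Fin n → Option (Fin n)) × (Fin n → Option A) //
    IsDepTree p.1 ∧ Projective p.1 ∧ ∀ j : Fin n, (p.1 j = none ↔ p.2 j = none)}

/-- Labeled hexatags: `Sum.inl (b, a)` is a terminal tag with arc label `a`, where `b` says whether
the leaf is a right child; `Sum.inr` gives the nonterminals `⇐L`, `⇐R`, `⇒L`, `⇒R` in this order. -/
abbrev LabeledHexatag (A : Type*) : Type _ := (Bool × A) ⊕ Fin 4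

variable {A : Type*}

/-- The hexatag underlying a labeled hexatag. -/
def LabeledHexatag.toHexatag : LabeledHexatag A → Hexatag
  | .inl (false, _) => .tL
  | .inl (true, _) => .tR
  | .inr 0 => .leftL
  | .inr 1 => .leftR
  | .inr 2 => .rightL
  | .inr 3 => .rightR

/-- The arc label carried by a labeled hexatag, if it is a terminal. -/
def LabeledHexatag.label? : LabeledHexatag A → Option A
  | .inl (_, a) => some a
  | .inr _ => none

namespace BHT

/-- In-order linearization of a binary head tree whose leaf positions start at `i`, the leaf at
position `k` carrying the label `lab k`. The Boolean plays the same role as in `hexatagsAux`. -/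
def labeledHexatagsAux (lab : ℕ → A) : BHT → Bool → ℕ → List (LabeledHexatag A)
  | .leaf, b, i => [.inl (b, lab i)]
  | .nodeL l r, b, i =>
      l.labeledHexatagsAux lab false i ++
        .inr (if b then 2 else 0) :: r.labeledHexatagsAux lab true (i + l.numLeaves)
  | .nodeR l r, b, i =>
      l.labeledHexatagsAux lab false i ++
        .inr (if b then 3 else 1) :: r.labeledHexatagsAux lab true (i + l.numLeaves)

/-- The labeled hexatag linearization of a binary head tree placed over positions from `0`. -/
def labeledHexatags (lab : ℕ → A) (T : BHT) : List (LabeledHexatag A) :=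
  T.labeledHexatagsAux lab false 0

theorem length_labeledHexatagsAux_add_one (lab : ℕ → A) (T : BHT) (b : Bool) (i : ℕ) :
    (T.labeledHexatagsAux lab b i).length + 1 = 2 * T.numLeaves := by
  induction T generalizing b i with
  | leaf => rfl
  | nodeL l r ihl ihr | nodeR l r ihl ihr =>
    simp only [labeledHexatagsAux, List.length_append, List.length_cons, numLeaves]
    have := ihl false i
    have := ihr true (i + l.numLeaves)
    omega

theorem length_labeledHexatags (lab : ℕ → A) (T : BHT) :
    (T.labeledHexatags lab).length = 2 * T.numLeaves - 1 :=
  Nat.eq_sub_of_add_eq (T.length_labeledHexatagsAux_add_one lab false 0)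

theorem map_toHexatag_labeledHexatagsAux (lab : ℕ → A) (T : BHT) (b : Bool) (i : ℕ) :
    (T.labeledHexatagsAux lab b i).map LabeledHexatag.toHexatag = T.hexatagsAux b := by
  induction T generalizing b i with
  | leaf => cases b <;> rfl
  | nodeL l r ihl ihr | nodeR l r ihl ihr =>
    cases b <;>
      simp [labeledHexatagsAux, hexatagsAux, LabeledHexatag.toHexatag, ihl, ihr]

theorem filterMap_label?_labeledHexatagsAux (lab : ℕ → A) (T : BHT) (b : Bool) (i : ℕ) :
    (T.labeledHexatagsAux lab b i).filterMap LabeledHexatag.label? =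
      (List.range' i T.numLeaves).map lab := by
  induction T generalizing b i with
  | leaf => rfl
  | nodeL l r ihl ihr | nodeR l r ihl ihr =>
    simp only [labeledHexatagsAux, List.filterMap_append, List.filterMap_cons,
      LabeledHexatag.label?, ihl, ihr, numLeaves, ← List.map_append, List.range'_append_1]

theorem eq_of_labeledHexatags_eq {lab lab' : ℕ → A} {T T' : BHT}
    (heq : T.labeledHexatags lab = T'.labeledHexatags lab') :
    T = T' ∧ ∀ k < T.numLeaves, lab k = lab' k := by
  obtain rfl : T = T' := hexatags_injective <| by
    simpa only [hexatags, labeledHexatags, map_toHexatag_labeledHexatagsAux] using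
      congrArg (List.map LabeledHexatag.toHexatag) heq
  refine ⟨rfl, fun k hk => ?_⟩
  have hlabels : (List.range' 0 T.numLeaves).map lab = (List.range' 0 T.numLeaves).map lab' := by
    simpa only [labeledHexatags, filterMap_label?_labeledHexatagsAux] using
      congrArg (List.filterMap LabeledHexatag.label?) heq
  exact List.map_inj_left.1 hlabels k (by simpa using hk)

end BHT

/-- The labels of `l` as a function on `ℕ`, with an arbitrary label where `l` is undefined. -/
noncomputable def totalLabel [Nonempty A] {n : ℕ} (l : Fin n → Option A) : ℕ → A :=
  Function.extend Fin.val (fun j => (l j).getD (Classical.arbitrary A))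
    fun _ => Classical.arbitrary A

theorem eq_of_totalLabel_eq [Nonempty A] {n : ℕ} {l l' : Fin n → Option A}
    (hnone : ∀ j, l j = none ↔ l' j = none)
    (htotal : ∀ j : Fin n, totalLabel l j = totalLabel l' j) : l = l' := by
  funext j
  have hj := htotal j
  simp only [totalLabel, Fin.val_injective.extend_apply] at hj
  have := hnone j
  cases hl : l j <;> cases hl' : l' j <;> simp_all

theorem LabeledProjectiveTree.subsingleton_of_isEmpty (n : ℕ) (A : Type*) [IsEmpty A] :
    Subsingleton (LabeledProjectiveTree n A) := by
  refine ⟨fun ⟨⟨h, l⟩, _, _, hl⟩ ⟨⟨h', l'⟩, _, _, hl'⟩ => ?_⟩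
  have hh : h = h' := funext fun j =>
    ((hl j).2 (Subsingleton.elim _ _)).trans ((hl' j).2 (Subsingleton.elim _ _)).symm
  subst hh
  congr
  exact Subsingleton.elim _ _

end Labeling

theorem labeled_injective_encoding_general (A : Type*) (n : ℕ) :
    ∃ f : LabeledProjectiveTree n A → {l : List (LabeledHexatag A) // l.length = 2 * n - 1},
      Function.Injective f := by
  cases isEmpty_or_nonempty A
  · have := LabeledProjectiveTree.subsingleton_of_isEmpty n A
    exact ⟨fun _ => ⟨List.replicate _ (.inr 0), List.length_replicate⟩,
      Function.injective_of_subsingleton _⟩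
  choose T hleaves harcs using fun p : LabeledProjectiveTree n A =>
    exists_bht_of_projective p.2.1 p.2.2.1
  refine ⟨fun p => ⟨(T p).labeledHexatags (totalLabel p.1.2), ?_⟩, fun p q hpq => ?_⟩
  · rw [BHT.length_labeledHexatags, hleaves]
  obtain ⟨hT, hlabel⟩ := BHT.eq_of_labeledHexatags_eq (congrArg Subtype.val hpq)
  have hhead : p.1.1 = q.1.1 := by
    funext j
    ext i
    rw [← harcs p i j, ← harcs q i j, hT]
  have hlab : p.1.2 = q.1.2 := eq_of_totalLabel_eq
    (fun j => by rw [← p.2.2.2, ← q.2.2.2, hhead])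
    fun j => hlabel j ((hleaves p).symm ▸ j.isLt)
  exact Subtype.ext (Prod.ext hhead hlab)

theorem labeled_injective_encoding (A : Type) [Fintype A] (n : ℕ) (hn : 1 ≤ n) :
    Fintype.card ((Bool × A) ⊕ Fin 4) = 2 * Fintype.card A + 4 ∧
    ∃ f : {p : (Fin n → Option (Fin n)) × (Fin n → Option A) //
            IsDepTree p.1 ∧ Projective p.1 ∧ ∀ j : Fin n, (p.1 j = none ↔ p.2 j = none)} →
          {l : List ((Bool × A) ⊕ Fin 4) // l.length = 2 * n - 1},
      Function.Injective f :=
  ⟨by simp [mul_comm], labeled_injective_encoding_general A n⟩
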